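/- Let I ⊆ ℝ be an interval, n ≥ 1, v ∈ ℝⁿ with v ≠ 0, and let δ : I → ℝⁿ be differentiable such that for each τ ∈ I there is a linear map A(τ) : ℝⁿ → ℝⁿ satisfying ⟨A(τ)u, u⟩ > 0 for all u ≠ 0 and δ′(τ) = A(τ)⁻¹ v. Then δ is injective on I. -/

import Mathlib

open scoped RealInnerProductSpace
open Set

section Functional

variable {E : Type*} [NormedAddCommGroup E] [NormedSpace ℝ E] {I : Set ℝ} {f f' : ℝ → E}

theorem strictMonoOn_clm_comp_of_hasDerivAt_pos (ℓ : E →L[ℝ] ℝ) (hI : Convex ℝ I)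
    (hf : ContinuousOn f I) (hf' : ∀ x ∈ interior I, HasDerivAt f (f' x) x)
    (hpos : ∀ x ∈ interior I, 0 < ℓ (f' x)) : StrictMonoOn (ℓ ∘ f) I :=
  strictMonoOn_of_hasDerivWithinAt_pos hI (ℓ.continuous.comp_continuousOn hf)
    (fun x hx ↦ (ℓ.hasFDerivAt.comp_hasDerivAt x (hf' x hx)).hasDerivWithinAt) hpos

end Functional

section InnerProduct

variable {E : Type*} [NormedAddCommGroup E] [InnerProductSpace ℝ E]

theorem inner_pos_of_map_eq {A : E →ₗ[ℝ] E} (hA : ∀ u, u ≠ 0 → 0 < ⟪A u, u⟫) {v w : E}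
    (hv : v ≠ 0) (hw : A w = v) : 0 < ⟪v, w⟫ := by
  have hw_ne : w ≠ 0 := by
    rintro rfl
    exact hv (hw.symm.trans (map_zero A))
  exact hw ▸ hA w hw_ne

theorem stmt_11_general {I : Set ℝ} (hI : I.OrdConnected) {v : E} (hv : v ≠ 0) {δ δ' : ℝ → E}
    (hδ : ContinuousOn δ I) (hδ' : ∀ τ ∈ interior I, HasDerivAt δ (δ' τ) τ)
    (hA : ∀ τ ∈ interior I, ∃ A : E →ₗ[ℝ] E, (∀ u, u ≠ 0 → 0 < ⟪A u, u⟫) ∧ A (δ' τ) = v) :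
    InjOn δ I := by
  have hpos : ∀ τ ∈ interior I, 0 < ⟪v, δ' τ⟫ := by
    intro τ hτ
    obtain ⟨A, hA_pos, hA_eq⟩ := hA τ hτ
    exact inner_pos_of_map_eq hA_pos hv hA_eq
  have hmono : StrictMonoOn (innerSL ℝ v ∘ δ) I :=
    strictMonoOn_clm_comp_of_hasDerivAt_pos (innerSL ℝ v) hI.convex hδ hδ' hpos
  exact InjOn.of_comp hmono.injOn

end InnerProduct

/-- If the derivative of `δ : I → ℝⁿ` is everywhere of the form `A(τ)⁻¹ v` for a
fixed nonzero vector `v` and positive definite linear maps `A(τ)`, then `δ` is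
injective on the interval `I`. -/
theorem stmt_11 (n : ℕ) (hn : 1 ≤ n)
    (I : Set ℝ) (hIconn : I.OrdConnected)
    (v : EuclideanSpace ℝ (Fin n)) (hv : v ≠ 0)
    (δ δ' : ℝ → EuclideanSpace ℝ (Fin n))
    (hδ : ∀ τ ∈ I, HasDerivAt δ (δ' τ) τ)
    (hA : ∀ τ ∈ I, ∃ A : EuclideanSpace ℝ (Fin n) →L[ℝ] EuclideanSpace ℝ (Fin n),
      (∀ u : EuclideanSpace ℝ (Fin n), u ≠ 0 → 0 < ⟪A u, u⟫) ∧ A (δ' τ) = v) :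
    Set.InjOn δ I :=
  stmt_11_general hIconn hv (HasDerivAt.continuousOn hδ) (fun τ hτ ↦ hδ τ (interior_subset hτ))
    fun τ hτ ↦ (hA τ (interior_subset hτ)).imp' ContinuousLinearMap.toLinearMap fun _ ↦ id
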